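/- For every fixed r with 0 < r < 1, the function U_θ(r,θ) := r·∂²W/∂r∂θ(r,θ) − ∂W/∂θ(r,θ) = (8/π) · ∑_{n=1}^∞ r^{mₙ²} cos(mₙθ) is strictly positive for θ ∈ [0,π/4), strictly negative for θ ∈ (π/4,π/2], and equals zero exactly when θ = π/4. -/

import Mathlib

/-!
Up to the factor `(8/π) r⁴`, the series `Uθ r θ` is the theta function
`∑_{n ≥ 0} Q^{n(n+1)} cos ((2n+1)φ)` with `φ = 2θ` and `Q = r ^ 16`. By the Jacobi triple product it
is a positive constant times `cos φ · ∏_k (1 + 2 Q^{2k} cos 2φ + Q^{4k})`, whose quadratic factors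
are at least `(1 - Q^{2k})²`; hence it has the sign of `cos 2θ`.

Only the sign is needed, so the triple product is used in finite form (`jacCoeff_hasSum`): an
induction on the number of factors, whose coefficients are Gaussian binomials satisfying the
recursion `jacCoeff_succ`. Letting the number of factors grow (dominated convergence, with the
uniform lower bound `jacProd_lower`) gives `theta_int_pos`, which is positivity for `θ < π/4`. The
antisymmetry `Uθ r (π/2 - θ) = -Uθ r θ` gives the rest of the sign pattern.

The formula for `Uθ` in terms of `W` is termwise differentiation: `r ∂_r` multiplies the `m`-th term
of `∂_θ W` by `m²`, so `r ∂_r ∂_θ W - ∂_θ W` cancels the denominator `m² - 1`.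
-/

open Real Set Topology Filter

/-- `mIdx n = 4(n+1) - 2 = 4n + 2`, the odd-indexed frequencies `2, 6, 10, …`. -/
def mIdx (n : ℕ) : ℕ := 4 * n + 2

/-- `W(r,θ) = (8/π) ∑_{n≥1} r^{mₙ²} sin(mₙ θ) / ((mₙ² − 1) mₙ)` with `mₙ = 4n − 2`. -/
noncomputable def W (r θ : ℝ) : ℝ :=
  (8 / π) * ∑' n : ℕ,
    r ^ (mIdx n ^ 2) * Real.sin ((mIdx n : ℝ) * θ) / (((mIdx n : ℝ) ^ 2 - 1) * (mIdx n : ℝ))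

/-- `U_θ(r,θ) = (8/π) ∑_{n≥1} r^{mₙ²} cos(mₙθ)`. -/
noncomputable def Uθ (r θ : ℝ) : ℝ :=
  (8 / π) * ∑' n : ℕ, r ^ (mIdx n ^ 2) * Real.cos ((mIdx n : ℝ) * θ)

/-! ### Finite Jacobi triple product and its limit -/

/-- The finite `q`-Pochhammer product `∏_{k=1}^N (1 - Q^{2k})`, i.e. `(q; q)_N` with `q = Q ^ 2`.
Working with the square root `Q` of `q` turns `q^{n(n+1)/2}` into the division-free `Q^{n(n+1)}`. -/
noncomputable def qPoch (Q : ℝ) (N : ℕ) : ℝ := ∏ k ∈ Finset.range N, (1 - Q ^ (2 * (k + 1)))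

/-- The reciprocal `1 / (q; q)_j` extended by `0` to negative `j`, which makes the recursion
`qPochInv_rec` valid for every integer `j`. -/
noncomputable def qPochInv (Q : ℝ) (j : ℤ) : ℝ := if 0 ≤ j then (qPoch Q j.toNat)⁻¹ else 0

/-- The `n`-th coefficient of the finite Jacobi triple product: the Gaussian binomial
`[2N+1 choose N-n]_q` times `q^{n(n+1)/2}`, with `q = Q ^ 2`; it vanishes unless
`-(N+1) ≤ n ≤ N`. -/
noncomputable def jacCoeff (Q : ℝ) (N : ℕ) (n : ℤ) : ℝ :=
  qPoch Q (2 * N + 1) * qPochInv Q (N - n) * qPochInv Q (N + 1 + n) * Q ^ (n * (n + 1))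

/-- The finite Jacobi product `cos φ · ∏_{k=1}^N (1 + 2 q^k cos 2φ + q^{2k})`, with `q = Q ^ 2`. -/
noncomputable def jacProd (Q φ : ℝ) (N : ℕ) : ℝ :=
  Real.cos φ * ∏ k ∈ Finset.range N,
    (1 + 2 * Q ^ (2 * (k + 1)) * Real.cos (2 * φ) + Q ^ (4 * (k + 1)))

section
variable {Q : ℝ}

lemma factor_pos (h0 : 0 < Q) (h1 : Q < 1) (k : ℕ) : 0 < 1 - Q ^ (2 * (k + 1)) := by
  have := pow_lt_one₀ h0.le h1 (show 2 * (k + 1) ≠ 0 by omega)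
  linarith

lemma qPoch_pos (h0 : 0 < Q) (h1 : Q < 1) (N : ℕ) : 0 < qPoch Q N :=
  Finset.prod_pos fun k _ => factor_pos h0 h1 k

lemma qPoch_anti (h0 : 0 < Q) (h1 : Q < 1) : Antitone (qPoch Q) := by
  refine antitone_nat_of_succ_le fun N => ?_
  rw [qPoch, Finset.prod_range_succ]
  have := pow_pos h0 (2 * (N + 1))
  exact mul_le_of_le_one_right (qPoch_pos h0 h1 N).le (by linarith)

/-- The infinite product `(q; q)_∞` converges to a positive number bounding all partial products
from below. -/
lemma qPoch_tendsto (h0 : 0 < Q) (h1 : Q < 1) :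
    ∃ L, 0 < L ∧ Tendsto (qPoch Q) atTop (𝓝 L) ∧ ∀ N, L ≤ qPoch Q N := by
  have hs : Summable fun k : ℕ => ‖-Q ^ (2 * (k + 1))‖ := by
    have : Summable fun k : ℕ => Q ^ k := summable_geometric_of_lt_one h0.le h1
    refine this.of_nonneg_of_le (fun _ => norm_nonneg _) fun k => ?_
    rw [norm_neg, Real.norm_of_nonneg (by positivity)]
    exact pow_le_pow_of_le_one h0.le h1.le (by omega)
  have hf : ∀ k, 1 + -Q ^ (2 * (k + 1)) ≠ 0 := fun k => by
    have := factor_pos h0 h1 k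
    linarith
  have hm := multipliable_one_add_of_summable hs
  have ht := hm.hasProd.tendsto_prod_nat
  have hne := tprod_one_add_ne_zero_of_summable (f := fun k : ℕ => -Q ^ (2 * (k + 1))) hf hs
  have ht' : Tendsto (qPoch Q) atTop (𝓝 (∏' k : ℕ, (1 + -Q ^ (2 * (k + 1))))) := by
    simp only [← sub_eq_add_neg] at ht ⊢
    exact ht
  refine ⟨_, lt_of_le_of_ne ?_ hne.symm, ht', fun N => (qPoch_anti h0 h1).le_of_tendsto ht' N⟩
  exact ge_of_tendsto' ht' fun N => (qPoch_pos h0 h1 N).le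

lemma qPochInv_rec (h0 : 0 < Q) (h1 : Q < 1) (j : ℤ) :
    qPochInv Q (j - 1) = (1 - Q ^ (2 * j)) * qPochInv Q j := by
  rcases lt_trichotomy j 0 with hj | rfl | hj
  · simp [qPochInv, not_le.2 hj, show ¬ (1 ≤ j) by omega]
  · simp [qPochInv]
  · obtain ⟨k, rfl⟩ : ∃ k : ℕ, j = k + 1 := ⟨(j - 1).toNat, by omega⟩
    have hp := qPoch_pos h0 h1 k
    have hf := factor_pos h0 h1 k
    have e : Q ^ (2 * ((k : ℤ) + 1)) = Q ^ (2 * (k + 1)) := by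
      rw [← zpow_natCast]; push_cast; rfl
    have e2 : ((k : ℤ) + 1).toNat = k + 1 := by omega
    rw [e]
    simp only [qPochInv, add_sub_cancel_right, e2, Int.toNat_natCast]
    rw [if_pos (by omega), if_pos (by omega), qPoch, qPoch, Finset.prod_range_succ]
    rw [qPoch] at hp
    field_simp

/-- The coefficient recursion expressing multiplication by
`1 + q^{N+1} (e^{2iφ} + e^{-2iφ}) + q^{2N+2}`. -/
lemma jacCoeff_succ (h0 : 0 < Q) (h1 : Q < 1) (N : ℕ) (n : ℤ) :
    jacCoeff Q (N + 1) n = (1 + Q ^ (4 * (N + 1))) * jacCoeff Q N n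
      + Q ^ (2 * (N + 1)) * (jacCoeff Q N (n - 1) + jacCoeff Q N (n + 1)) := by
  have hQ := h0.ne'
  have ea := qPochInv_rec h0 h1 (N + 1 - n)
  have ea' := qPochInv_rec h0 h1 (N - n)
  have eb := qPochInv_rec h0 h1 (N + 2 + n)
  have eb' := qPochInv_rec h0 h1 (N + 1 + n)
  rw [show (N + 1 - n - 1 : ℤ) = N - n by ring] at ea
  rw [show (N + 2 + n - 1 : ℤ) = N + 1 + n by ring] at eb
  rw [show (N + 1 + n - 1 : ℤ) = N + n by ring] at eb'
  have hA : qPoch Q (2 * (N + 1) + 1) = qPoch Q (2 * N + 1)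
      * (1 - Q ^ (4 * (N + 1))) * (1 - Q ^ (4 * N + 6)) := by
    rw [qPoch, qPoch, show 2 * (N + 1) + 1 = 2 * N + 1 + 1 + 1 by ring,
      Finset.prod_range_succ, Finset.prod_range_succ]
    ring
  simp only [jacCoeff, hA]
  push_cast
  rw [show (N + 1 + 1 + n : ℤ) = N + 2 + n by ring, show (N - (n - 1) : ℤ) = N + 1 - n by ring,
    show (N + 1 + (n - 1) : ℤ) = N + n by ring, show (N - (n + 1) : ℤ) = N - n - 1 by ring,
    show (N + 1 + (n + 1) : ℤ) = N + 2 + n by ring, ea', eb', ea, eb]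
  generalize qPochInv Q (N + 1 - n) = x
  generalize qPochInv Q (N + 2 + n) = y
  generalize qPoch Q (2 * N + 1) = P
  have z1 : Q ^ ((n - 1) * (n - 1 + 1)) = Q ^ (n * (n + 1)) * (Q ^ n)⁻¹ ^ 2 := by
    rw [← zpow_neg, ← zpow_natCast, ← zpow_mul, ← zpow_add₀ hQ]; congr 1; push_cast; ring
  have z2 : Q ^ ((n + 1) * (n + 1 + 1)) = Q ^ (n * (n + 1)) * (Q ^ n) ^ 2 * Q ^ 2 := by
    rw [← zpow_natCast, ← zpow_natCast, ← zpow_mul, ← zpow_add₀ hQ, ← zpow_add₀ hQ]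
    congr 1; push_cast; ring
  have w1 : Q ^ (2 * (N + 1 - n : ℤ)) = (Q ^ N) ^ 2 * Q ^ 2 * (Q ^ n)⁻¹ ^ 2 := by
    simp only [← zpow_neg, ← zpow_natCast, ← zpow_mul, ← zpow_add₀ hQ]
    congr 1; push_cast; ring
  have w2 : Q ^ (2 * (N - n : ℤ)) = (Q ^ N) ^ 2 * (Q ^ n)⁻¹ ^ 2 := by
    simp only [← zpow_neg, ← zpow_natCast, ← zpow_mul, ← zpow_add₀ hQ]
    congr 1; push_cast; ring
  have w3 : Q ^ (2 * (N + 2 + n : ℤ)) = (Q ^ N) ^ 2 * Q ^ 4 * (Q ^ n) ^ 2 := by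
    simp only [← zpow_natCast, ← zpow_mul, ← zpow_add₀ hQ]
    congr 1; push_cast; ring
  have w4 : Q ^ (2 * (N + 1 + n : ℤ)) = (Q ^ N) ^ 2 * Q ^ 2 * (Q ^ n) ^ 2 := by
    simp only [← zpow_natCast, ← zpow_mul, ← zpow_add₀ hQ]
    congr 1; push_cast; ring
  have v1 : Q ^ (4 * (N + 1)) = (Q ^ N) ^ 4 * Q ^ 4 := by ring
  have v2 : Q ^ (4 * N + 6) = (Q ^ N) ^ 4 * Q ^ 6 := by ring
  have v3 : Q ^ (2 * (N + 1)) = (Q ^ N) ^ 2 * Q ^ 2 := by ring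
  rw [z1, z2, w1, w2, w3, w4, v1, v2, v3]
  have hu : Q ^ n ≠ 0 := zpow_ne_zero _ hQ
  generalize Q ^ n = u at *
  generalize Q ^ N = v
  generalize Q ^ (n * (n + 1)) = E
  field_simp
  ring

/-- The finite Jacobi triple product, as a bilateral cosine sum. Each cosine occurs twice, at `n` and
`-1 - n`, whence the factor `2`. -/
lemma jacCoeff_hasSum (h0 : 0 < Q) (h1 : Q < 1) (φ : ℝ) (N : ℕ) :
    HasSum (fun n : ℤ => jacCoeff Q N n * Real.cos ((2 * n + 1) * φ)) (2 * jacProd Q φ N) := by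
  induction N with
  | zero =>
    -- Only `n = 0` and `n = -1` contribute when `N = 0`.
    have hz : ∀ n : ℤ, n ∉ ({0, -1} : Finset ℤ) →
        jacCoeff Q 0 n * Real.cos ((2 * n + 1) * φ) = 0 := by
      intro n hn
      simp only [Finset.mem_insert, Finset.mem_singleton, not_or] at hn
      rcases lt_or_ge 0 n with h | h
      · simp [jacCoeff, qPochInv, not_le.2 h]
      · simp [jacCoeff, qPochInv, show ¬ (0 ≤ 1 + n) by omega]
    have := hasSum_sum_of_ne_finset_zero (L := .unconditional ℤ) hz
    convert this using 1
    have hp := qPoch_pos h0 h1 1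
    have e : (2 * (-1) + 1) * φ = -φ := by ring
    rw [Finset.sum_insert (by decide), Finset.sum_singleton]
    simp only [jacCoeff, jacProd, qPochInv]
    push_cast
    rw [e, Real.cos_neg]
    have hp0 : qPoch Q 0 = 1 := by simp [qPoch]
    simp [hp.ne', hp0]
    ring
  | succ N ih =>
    set f : ℤ → ℝ := fun n => jacCoeff Q N n * Real.cos ((2 * n + 1) * φ) with hf
    set x := Q ^ (2 * (N + 1)) with hx
    set g₁ : ℤ → ℝ := fun n => jacCoeff Q N n * Real.cos ((2 * n + 3) * φ) with hg₁
    set g₂ : ℤ → ℝ := fun n => jacCoeff Q N n * Real.cos ((2 * n - 1) * φ) with hg₂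
    have hbd : ∀ (c : ℤ → ℝ), Summable fun n => jacCoeff Q N n * Real.cos (c n * φ) := by
      intro c
      refine summable_of_ne_finset_zero (s := Finset.Icc (-(N + 1 : ℤ)) N) fun n hn => ?_
      rw [Finset.mem_Icc, not_and_or, not_le, not_le] at hn
      rcases hn with h | h
      · simp [jacCoeff, qPochInv, show ¬ (0 ≤ (N : ℤ) + 1 + n) by omega]
      · simp [jacCoeff, qPochInv, show ¬ (n ≤ (N : ℤ)) by omega]
    have s₁ : Summable g₁ := by simpa [hg₁] using hbd fun n => 2 * n + 3
    have s₂ : Summable g₂ := by simpa [hg₂] using hbd fun n => 2 * n - 1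
    -- Product-to-sum: `2 cos 2φ cos ((2n+1)φ)` splits into the two neighbouring frequencies.
    have hsum : HasSum (fun n => 2 * Real.cos (2 * φ) * f n) (∑' n, g₁ n + ∑' n, g₂ n) := by
      convert s₁.hasSum.add s₂.hasSum using 2 with n
      simp only [hf, hg₁, hg₂]
      rw [show (2 * (n : ℝ) + 3) * φ = (2 * n + 1) * φ + 2 * φ by ring,
        show (2 * (n : ℝ) - 1) * φ = (2 * n + 1) * φ - 2 * φ by ring, Real.cos_add, Real.cos_sub]
      ring
    have hval := hsum.unique (ih.mul_left (2 * Real.cos (2 * φ)))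
    have t₁ : HasSum (fun n : ℤ => jacCoeff Q N (n - 1) * Real.cos ((2 * n + 1) * φ))
        (∑' n, g₁ n) := by
      rw [← (Equiv.addRight (1 : ℤ)).hasSum_iff]
      convert s₁.hasSum using 1
      funext n
      simp only [hg₁, Function.comp, Equiv.coe_addRight, add_sub_cancel_right]
      push_cast
      ring_nf
    have t₂ : HasSum (fun n : ℤ => jacCoeff Q N (n + 1) * Real.cos ((2 * n + 1) * φ))
        (∑' n, g₂ n) := by
      rw [← (Equiv.addRight (-1 : ℤ)).hasSum_iff]
      convert s₂.hasSum using 1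
      funext n
      simp only [hg₂, Function.comp, Equiv.coe_addRight, neg_add_cancel_right]
      push_cast
      ring_nf
    have key := (ih.mul_left (1 + Q ^ (4 * (N + 1)))).add ((t₁.add t₂).mul_left x)
    have hterm : (fun n : ℤ => jacCoeff Q (N + 1) n * Real.cos ((2 * n + 1) * φ)) =
        fun n : ℤ => (1 + Q ^ (4 * (N + 1))) * f n
          + x * (jacCoeff Q N (n - 1) * Real.cos ((2 * n + 1) * φ)
            + jacCoeff Q N (n + 1) * Real.cos ((2 * n + 1) * φ)) := by
      funext n
      rw [jacCoeff_succ h0 h1]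
      simp only [hf]
      ring
    have hprod : 2 * jacProd Q φ (N + 1) = (1 + Q ^ (4 * (N + 1))) * (2 * jacProd Q φ N)
        + x * (∑' n, g₁ n + ∑' n, g₂ n) := by
      rw [hval, jacProd, Finset.prod_range_succ, ← hx]
      simp only [jacProd]
      ring
    rw [hterm, hprod]
    exact key

/-- Each quadratic factor is at least `(1 - q^k)^2`; this bound survives the passage to the limit and
gives strict positivity there. -/
lemma jacProd_lower (h0 : 0 < Q) {φ : ℝ} (hφ : 0 < Real.cos φ) (N : ℕ) :
    Real.cos φ * qPoch Q N ^ 2 ≤ jacProd Q φ N := by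
  rw [jacProd, qPoch, ← Finset.prod_pow]
  refine mul_le_mul_of_nonneg_left (Finset.prod_le_prod (fun k _ => sq_nonneg _) fun k _ => ?_) hφ.le
  have hx := pow_pos h0 (2 * (k + 1))
  rw [show Q ^ (4 * (k + 1)) = (Q ^ (2 * (k + 1))) ^ 2 by ring]
  nlinarith [Real.neg_one_le_cos (2 * φ)]

lemma summable_theta (h0 : 0 < Q) (h1 : Q < 1) : Summable fun n : ℤ => Q ^ (n * (n + 1)) := by
  have hn : Summable fun n : ℕ => Q ^ (((n : ℤ)) * ((n : ℤ) + 1)) := by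
    refine (summable_geometric_of_lt_one h0.le h1).of_nonneg_of_le (fun _ => by positivity)
      fun n => ?_
    rw [show ((n : ℤ)) * ((n : ℤ) + 1) = ((n * (n + 1) : ℕ) : ℤ) by push_cast; ring, zpow_natCast]
    exact pow_le_pow_of_le_one h0.le h1.le (by nlinarith)
  refine Summable.of_nat_of_neg_add_one hn (hn.congr fun n => ?_)
  congr 1
  ring

lemma qPochInv_tendsto {L : ℝ} (hL : 0 < L) (ht : Tendsto (qPoch Q) atTop (𝓝 L)) {j : ℕ → ℤ}
    (hj : Tendsto j atTop atTop) : Tendsto (fun N => qPochInv Q (j N)) atTop (𝓝 L⁻¹) := by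
  have h1 : Tendsto (fun N => (j N).toNat) atTop atTop := by
    refine tendsto_atTop.2 fun b => (tendsto_atTop.1 hj b).mono fun N hN => ?_
    omega
  refine ((ht.comp h1).inv₀ hL.ne').congr' ?_
  filter_upwards [tendsto_atTop.1 hj 0] with N hN
  simp [qPochInv, hN]

lemma qPochInv_bound {L : ℝ} (hL : 0 < L) (hle : ∀ N, L ≤ qPoch Q N) (j : ℤ) :
    0 ≤ qPochInv Q j ∧ qPochInv Q j ≤ L⁻¹ := by
  rw [qPochInv]
  split_ifs
  · exact ⟨inv_nonneg.2 (hL.le.trans (hle _)), inv_anti₀ hL (hle _)⟩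
  · exact ⟨le_rfl, inv_nonneg.2 hL.le⟩

/-- Positivity of the bilateral theta series, by letting `N → ∞` in `jacCoeff_hasSum`. -/
lemma theta_int_pos (h0 : 0 < Q) (h1 : Q < 1) {φ : ℝ} (hφ : 0 < Real.cos φ) :
    0 < ∑' n : ℤ, Q ^ (n * (n + 1)) * Real.cos ((2 * n + 1) * φ) := by
  obtain ⟨L, hL, ht, hle⟩ := qPoch_tendsto h0 h1
  have hlim : Tendsto (fun N => ∑' n : ℤ, jacCoeff Q N n * Real.cos ((2 * n + 1) * φ)) atTop
      (𝓝 (∑' n : ℤ, L * L⁻¹ * L⁻¹ * Q ^ (n * (n + 1)) * Real.cos ((2 * n + 1) * φ))) := by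
    refine tendsto_tsum_of_dominated_convergence
      (bound := fun n : ℤ => 1 * L⁻¹ * L⁻¹ * Q ^ (n * (n + 1)))
      ((summable_theta h0 h1).mul_left _) (fun n => ?_) (Eventually.of_forall fun N n => ?_)
    · refine (((Tendsto.mul (Tendsto.mul ?_ ?_) ?_).mul_const _).mul_const _)
      · refine ht.comp (tendsto_atTop.2 fun b => ?_)
        filter_upwards [eventually_ge_atTop b] with N hN
        omega
      · refine qPochInv_tendsto hL ht (tendsto_atTop.2 fun b => ?_)
        filter_upwards [eventually_ge_atTop (b + n).toNat] with N hN
        omega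
      · refine qPochInv_tendsto hL ht (tendsto_atTop.2 fun b => ?_)
        filter_upwards [eventually_ge_atTop (b - n).toNat] with N hN
        omega
    · have b1 := qPochInv_bound hL hle (N - n)
      have b2 := qPochInv_bound hL hle (N + 1 + n)
      have b3 : qPoch Q (2 * N + 1) ≤ 1 := by
        simpa [qPoch] using qPoch_anti h0 h1 (Nat.zero_le (2 * N + 1))
      have b4 := (qPoch_pos h0 h1 (2 * N + 1)).le
      have b5 : 0 < Q ^ (n * (n + 1)) := zpow_pos h0 _
      have hLi := inv_nonneg.2 hL.le
      have hnn : 0 ≤ jacCoeff Q N n :=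
        mul_nonneg (mul_nonneg (mul_nonneg b4 b1.1) b2.1) b5.le
      rw [norm_mul, Real.norm_of_nonneg hnn]
      refine (mul_le_of_le_one_right hnn (Real.abs_cos_le_one _)).trans ?_
      rw [jacCoeff]
      gcongr
      exacts [b2.1, b1.1, b1.2, b2.2]
  have hlow : 2 * (Real.cos φ * L ^ 2) ≤
      ∑' n : ℤ, L * L⁻¹ * L⁻¹ * Q ^ (n * (n + 1)) * Real.cos ((2 * n + 1) * φ) := by
    refine ge_of_tendsto' hlim fun N => ?_
    rw [(jacCoeff_hasSum h0 h1 φ N).tsum_eq]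
    refine mul_le_mul_of_nonneg_left (le_trans ?_ (jacProd_lower h0 hφ N)) zero_le_two
    gcongr
    exact hle N
  simp only [mul_assoc, tsum_mul_left] at hlow
  rw [mul_inv_cancel_left₀ hL.ne'] at hlow
  exact pos_of_mul_pos_right (lt_of_lt_of_le (by positivity) hlow) (inv_nonneg.2 hL.le)

lemma theta_nat_pos (h0 : 0 < Q) (h1 : Q < 1) {φ : ℝ} (hφ : 0 < Real.cos φ) :
    0 < ∑' n : ℕ, Q ^ (n * (n + 1)) * Real.cos ((2 * n + 1) * φ) := by
  have hs : Summable fun n : ℤ => Q ^ (n * (n + 1)) * Real.cos ((2 * n + 1) * φ) := by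
    refine (summable_theta h0 h1).of_norm_bounded fun n => ?_
    have b5 : 0 < Q ^ (n * (n + 1)) := zpow_pos h0 _
    rw [norm_mul, Real.norm_of_nonneg b5.le]
    exact mul_le_of_le_one_right b5.le (Real.abs_cos_le_one _)
  set F : ℤ → ℝ := fun n => Q ^ (n * (n + 1)) * Real.cos ((2 * n + 1) * φ) with hF
  have e1 : ∀ n : ℕ, F n = Q ^ (n * (n + 1)) * Real.cos ((2 * n + 1) * φ) := fun n => by
    simp only [hF]
    rw [← zpow_natCast]
    push_cast
    rfl
  have e2 : ∀ n : ℕ, F (-(n + 1)) = Q ^ (n * (n + 1)) * Real.cos ((2 * n + 1) * φ) := fun n => by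
    rw [← e1]
    simp only [hF]
    push_cast
    rw [← Real.cos_neg]
    ring_nf
  have hn : Summable fun n : ℕ => Q ^ (n * (n + 1)) * Real.cos ((2 * n + 1) * φ) := by
    refine (hs.comp_injective Nat.cast_injective).congr fun n => ?_
    exact e1 n
  have hh : HasSum F _ := HasSum.of_nat_of_neg_add_one (f := F)
    (by simpa only [e1] using hn.hasSum) (by simpa only [e2] using hn.hasSum)
  have := theta_int_pos h0 h1 hφ
  rw [hh.tsum_eq] at this
  linarith

end

/-! ### Termwise differentiation of `W` -/

lemma two_le_mIdx (n : ℕ) : (2 : ℝ) ≤ mIdx n := by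
  have : 2 ≤ mIdx n := by unfold mIdx; omega
  exact_mod_cast this

lemma le_mIdx_sq_sub (n : ℕ) : n ≤ mIdx n ^ 2 - 1 := by
  have : n + 1 ≤ mIdx n ^ 2 := by unfold mIdx; nlinarith
  omega

lemma mIdx_sq_sub_pos (n : ℕ) : 0 < (mIdx n : ℝ) ^ 2 - 1 := by
  nlinarith [two_le_mIdx n]

lemma hasDerivAt_W_left {r : ℝ} (h0 : 0 < r) (h1 : r < 1) (θ : ℝ) :
    HasDerivAt (fun s => W s θ) ((8 / π) * ∑' n : ℕ,
      ((mIdx n ^ 2 : ℕ) : ℝ) * r ^ (mIdx n ^ 2 - 1) * Real.sin (mIdx n * θ) /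
        (((mIdx n : ℝ) ^ 2 - 1) * mIdx n)) r := by
  -- On `(0, ρ)` with `r < ρ < 1` the differentiated terms are dominated by `ρ ^ n`.
  obtain ⟨ρ, hρ1, hρ2⟩ := exists_between h1
  have hρ0 : 0 < ρ := h0.trans hρ1
  refine HasDerivAt.const_mul _ ?_
  refine hasDerivAt_tsum_of_isPreconnected (u := fun n => ρ ^ n) (t := Ioo 0 ρ) (y₀ := r)
    (summable_geometric_of_lt_one hρ0.le hρ2) isOpen_Ioo isPreconnected_Ioo
    (fun n y _ => ((hasDerivAt_pow _ y).mul_const _).div_const _) (fun n y hy => ?_)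
    ⟨h0, hρ1⟩ ?_ ⟨h0, hρ1⟩
  · have hm := two_le_mIdx n
    have hp := mIdx_sq_sub_pos n
    have hy0 : 0 ≤ y := hy.1.le
    have hs := Real.abs_sin_le_one (mIdx n * θ)
    have hD : 0 < ((mIdx n : ℝ) ^ 2 - 1) * mIdx n := by positivity
    rw [norm_div, norm_mul, Real.norm_of_nonneg hD.le, Real.norm_of_nonneg (by positivity),
      Real.norm_eq_abs, div_le_iff₀ hD]
    have hy' : y ^ (mIdx n ^ 2 - 1) ≤ ρ ^ n :=
      (pow_le_pow_left₀ hy0 hy.2.le _).trans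
        (pow_le_pow_of_le_one hρ0.le hρ2.le (le_mIdx_sq_sub n))
    have hmm : ((mIdx n ^ 2 : ℕ) : ℝ) ≤ ((mIdx n : ℝ) ^ 2 - 1) * mIdx n := by
      push_cast
      nlinarith
    calc _ ≤ ((mIdx n ^ 2 : ℕ) : ℝ) * y ^ (mIdx n ^ 2 - 1) * 1 := by gcongr
      _ ≤ (((mIdx n : ℝ) ^ 2 - 1) * mIdx n) * ρ ^ n * 1 := by gcongr
      _ = _ := by ring
  · refine (summable_geometric_of_lt_one h0.le h1).of_norm_bounded fun n => ?_
    have hm := two_le_mIdx n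
    have hp := mIdx_sq_sub_pos n
    have hD : 1 ≤ ((mIdx n : ℝ) ^ 2 - 1) * mIdx n := by nlinarith
    rw [norm_div, norm_mul, Real.norm_of_nonneg (zero_le_one.trans hD),
      Real.norm_of_nonneg (by positivity), Real.norm_eq_abs]
    refine (div_le_self (by positivity) hD).trans ?_
    refine (mul_le_of_le_one_right (by positivity) (Real.abs_sin_le_one _)).trans ?_
    exact pow_le_pow_of_le_one h0.le h1.le ((le_mIdx_sq_sub n).trans (Nat.sub_le _ _))

/-- Termwise differentiation in the angle; the hypothesis `ha` bounds the differentiated terms. -/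
lemma hasDerivAt_sin_series {r : ℝ} (h0 : 0 < r) (h1 : r < 1) {a : ℕ → ℝ}
    (ha : ∀ n, |a n| * mIdx n ≤ 2 * r ^ n) (θ : ℝ) :
    HasDerivAt (fun t => ∑' n : ℕ, a n * Real.sin (mIdx n * t))
      (∑' n : ℕ, a n * (Real.cos (mIdx n * θ) * mIdx n)) θ := by
  have hz : Summable fun n => a n * Real.sin (mIdx n * (0 : ℝ)) := by
    simpa only [mul_zero, Real.sin_zero] using summable_zero
  refine hasDerivAt_tsum (u := fun n => 2 * r ^ n) (y₀ := (0 : ℝ))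
    (g := fun n t => a n * Real.sin (mIdx n * t))
    (g' := fun n t => a n * (Real.cos (mIdx n * t) * mIdx n))
    ((summable_geometric_of_lt_one h0.le h1).mul_left 2)
    (fun n y => ?_) (fun n y => ?_) hz θ
  · have : HasDerivAt (fun t : ℝ => (mIdx n : ℝ) * t) (mIdx n) y := by
      simpa using (hasDerivAt_id' y).const_mul (mIdx n : ℝ)
    exact this.sin.const_mul _
  · refine le_trans ?_ (ha n)
    rw [norm_mul, norm_mul, Real.norm_eq_abs, Real.norm_eq_abs, Real.norm_eq_abs,
      abs_of_nonneg (Nat.cast_nonneg (mIdx n) : (0 : ℝ) ≤ mIdx n)]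
    have := Real.abs_cos_le_one (mIdx n * y)
    gcongr
    exact mul_le_of_le_one_left (Nat.cast_nonneg _) this

lemma deriv_formula {r : ℝ} (h0 : 0 < r) (h1 : r < 1) (θ : ℝ) :
    r * deriv (fun t => deriv (fun s => W s t) r) θ - deriv (fun t => W r t) θ = Uθ r θ := by
  have hpw : ∀ n, r ^ (mIdx n ^ 2 - 1) ≤ r ^ n := fun n =>
    pow_le_pow_of_le_one h0.le h1.le (le_mIdx_sq_sub n)
  have hpw' : ∀ n, r ^ (mIdx n ^ 2) ≤ r ^ n := fun n =>
    pow_le_pow_of_le_one h0.le h1.le ((le_mIdx_sq_sub n).trans (Nat.sub_le _ _))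
  set a : ℕ → ℝ := fun n => ((mIdx n ^ 2 : ℕ) : ℝ) * r ^ (mIdx n ^ 2 - 1) /
    (((mIdx n : ℝ) ^ 2 - 1) * mIdx n) with ha
  set b : ℕ → ℝ := fun n => r ^ (mIdx n ^ 2) / (((mIdx n : ℝ) ^ 2 - 1) * mIdx n) with hb
  have ha' : ∀ n, |a n| * mIdx n ≤ 2 * r ^ n := fun n => by
    have hm := two_le_mIdx n
    have hp := mIdx_sq_sub_pos n
    have h := hpw n
    have hr := pow_pos h0 n
    rw [abs_of_nonneg (by positivity), ha]
    have e : ((mIdx n ^ 2 : ℕ) : ℝ) * r ^ (mIdx n ^ 2 - 1) / (((mIdx n : ℝ) ^ 2 - 1) * mIdx n)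
        * mIdx n = (mIdx n : ℝ) ^ 2 * r ^ (mIdx n ^ 2 - 1) / ((mIdx n : ℝ) ^ 2 - 1) := by
      push_cast
      field_simp
    rw [e, div_le_iff₀ hp]
    calc _ ≤ (mIdx n : ℝ) ^ 2 * r ^ n := by gcongr
      _ ≤ (2 * ((mIdx n : ℝ) ^ 2 - 1)) * r ^ n := by gcongr; nlinarith
      _ = _ := by ring
  have hb' : ∀ n, |b n| * mIdx n ≤ 2 * r ^ n := fun n => by
    have hm := two_le_mIdx n
    have hp := mIdx_sq_sub_pos n
    have h := hpw' n
    have hr := pow_pos h0 n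
    rw [abs_of_nonneg (by positivity), hb]
    have e : r ^ (mIdx n ^ 2) / (((mIdx n : ℝ) ^ 2 - 1) * mIdx n)
        * mIdx n = r ^ (mIdx n ^ 2) / ((mIdx n : ℝ) ^ 2 - 1) := by
      field_simp
    rw [e, div_le_iff₀ hp]
    have := mul_nonneg hr.le (show 0 ≤ 2 * ((mIdx n : ℝ) ^ 2 - 1) - 1 by nlinarith)
    linarith
  have d1 : (fun t => deriv (fun s => W s t) r) =
      fun t => (8 / π) * ∑' n : ℕ, a n * Real.sin (mIdx n * t) := by
    funext t
    rw [(hasDerivAt_W_left h0 h1 t).deriv]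
    congr 1
    refine tsum_congr fun n => ?_
    simp only [ha]
    ring
  have d2 : (fun t => W r t) = fun t => (8 / π) * ∑' n : ℕ, b n * Real.sin (mIdx n * t) := by
    funext t
    rw [W]
    congr 1
    refine tsum_congr fun n => ?_
    simp only [hb]
    ring
  have hsum : ∀ c : ℕ → ℝ, (∀ n, |c n| * mIdx n ≤ 2 * r ^ n) →
      Summable fun n => c n * (Real.cos (mIdx n * θ) * mIdx n) := fun c hc => by
    refine ((summable_geometric_of_lt_one h0.le h1).mul_left 2).of_norm_bounded fun n => ?_
    refine le_trans ?_ (hc n)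
    rw [norm_mul, norm_mul, Real.norm_eq_abs, Real.norm_eq_abs, Real.norm_eq_abs,
      abs_of_nonneg (Nat.cast_nonneg (mIdx n) : (0 : ℝ) ≤ mIdx n)]
    have := Real.abs_cos_le_one (mIdx n * θ)
    gcongr
    exact mul_le_of_le_one_left (Nat.cast_nonneg _) this
  rw [d1, d2, ((hasDerivAt_sin_series h0 h1 ha' θ).const_mul _).deriv,
    ((hasDerivAt_sin_series h0 h1 hb' θ).const_mul _).deriv, Uθ, mul_left_comm, ← mul_sub,
    ← tsum_mul_left, ← ((hsum a ha').mul_left r).tsum_sub (hsum b hb')]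
  congr 1
  refine tsum_congr fun n => ?_
  have hm := two_le_mIdx n
  have hp := (mIdx_sq_sub_pos n).ne'
  have hm0 : (mIdx n : ℝ) ≠ 0 := by positivity
  have e : r ^ (mIdx n ^ 2) = r * r ^ (mIdx n ^ 2 - 1) := by
    rw [← pow_succ', Nat.sub_add_cancel]
    exact Nat.one_le_pow _ _ (by unfold mIdx; omega)
  simp only [ha, hb]
  rw [e]
  push_cast
  field_simp

/-! ### Sign of `Uθ` -/

/-- With `φ = 2θ` and `Q = r ^ 16`, the identity `(4n+2)² = 4 + 16 n(n+1)` turns `Uθ` into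
`(8/π) r⁴` times the theta series. -/
lemma Uθ_pos {r : ℝ} (h0 : 0 < r) (h1 : r < 1) {θ : ℝ} (hθ : θ ∈ Ico (0 : ℝ) (π / 4)) :
    0 < Uθ r θ := by
  have hc : 0 < Real.cos (2 * θ) :=
    Real.cos_pos_of_mem_Ioo ⟨by linarith [hθ.1, Real.pi_pos], by linarith [hθ.2]⟩
  have h := theta_nat_pos (pow_pos h0 16) (pow_lt_one₀ h0.le h1 (by norm_num)) hc
  have e : ∀ n : ℕ, r ^ (mIdx n ^ 2) * Real.cos (mIdx n * θ) =
      r ^ 4 * ((r ^ 16) ^ (n * (n + 1)) * Real.cos ((2 * n + 1) * (2 * θ))) := fun n => by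
    rw [← pow_mul, ← mul_assoc, ← pow_add, mIdx]
    push_cast
    congr 2 <;> ring
  rw [Uθ]
  simp only [e, tsum_mul_left]
  have := Real.pi_pos
  positivity

/-- Antisymmetry about `θ = π/4`. -/
lemma Uθ_reflect (r θ : ℝ) : Uθ r (π / 2 - θ) = -Uθ r θ := by
  rw [Uθ, Uθ, ← mul_neg, ← tsum_neg]
  congr 1
  refine tsum_congr fun n => ?_
  have : (mIdx n : ℝ) * (π / 2 - θ) = π - mIdx n * θ + n * (2 * π) := by
    rw [mIdx]
    push_cast
    ring
  rw [this, Real.cos_add_nat_mul_two_pi, Real.cos_pi_sub, mul_neg]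

/-- for fixed `0 < r < 1`, `U_θ = r W_{rθ} − W_θ` equals the cosine series
and is positive on `[0,π/4)`, negative on `(π/4,π/2]`, vanishing exactly at `θ = π/4`. -/
theorem stmt4 (r : ℝ) (hr : r ∈ Ioo (0 : ℝ) 1) :
    (∀ θ ∈ Icc (0 : ℝ) (π / 2),
      r * deriv (fun t => deriv (fun s => W s t) r) θ - deriv (fun t => W r t) θ = Uθ r θ) ∧
    (∀ θ ∈ Ico (0 : ℝ) (π / 4), 0 < Uθ r θ) ∧
    (∀ θ ∈ Ioc (π / 4) (π / 2), Uθ r θ < 0) ∧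
    (∀ θ ∈ Icc (0 : ℝ) (π / 2), (Uθ r θ = 0 ↔ θ = π / 4)) := by
  obtain ⟨h0, h1⟩ := hr
  have hpos : ∀ θ ∈ Ico (0 : ℝ) (π / 4), 0 < Uθ r θ := fun θ hθ => Uθ_pos h0 h1 hθ
  have hneg : ∀ θ ∈ Ioc (π / 4) (π / 2), Uθ r θ < 0 := fun θ hθ => by
    have := hpos (π / 2 - θ) ⟨by linarith [hθ.2], by linarith [hθ.1]⟩
    rw [Uθ_reflect] at this
    linarith
  have hzero : Uθ r (π / 4) = 0 := by
    have := Uθ_reflect r (π / 4)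
    rw [show π / 2 - π / 4 = π / 4 by ring] at this
    linarith
  refine ⟨fun θ _ => deriv_formula h0 h1 θ, hpos, hneg, fun θ hθ => ⟨fun h => ?_, ?_⟩⟩
  · rcases lt_trichotomy θ (π / 4) with hlt | heq | hgt
    · exact absurd h (hpos θ ⟨hθ.1, hlt⟩).ne'
    · exact heq
    · exact absurd h (hneg θ ⟨hgt, hθ.2⟩).ne
  · rintro rfl
    exact hzero
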